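/- arXiv:2102.08452 — 6 statements merged into one kernel-verified Lean document; each statement's English description precedes it below -/
import Mathlib

section
/- Let E be a real normed vector space, m ≥ 1, and let f : E → (Fin m → ℝ) be a classifier with m logits. Let ε ≥ 0 and let K : Fin m → ℝ, K_i ≥ 0, be such that for every class i, the i-th logit x ↦ f(x)_i is Lipschitz with constant K_i. Suppose that at a point x ∈ E the class j satisfies the GloRo certification condition with radius ε: for every i ≠ j, f(x)_j > f(x)_i + (K_i + K_j)·ε. Then for every x' ∈ E with ‖x − x'‖ ≤ ε and every i ≠ j, f(x')_j > f(x')_i; in particular the strict-argmax prediction of f equals j at every point of the closed ε-ball around x, i.e. the prediction is ε-locally-robust at x. (Theorem 1 of the paper.) -/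
theorem gloro_local_robustness
    {E : Type*} [NormedAddCommGroup E] [NormedSpace ℝ E]
    {m : ℕ} (hm : 1 ≤ m) (f : E → Fin m → ℝ)
    (ε : ℝ) (hε : 0 ≤ ε)
    (K : Fin m → ℝ) (hK : ∀ i, 0 ≤ K i)
    (hLip : ∀ i : Fin m, ∀ x₁ x₂ : E, |f x₁ i - f x₂ i| ≤ K i * ‖x₁ - x₂‖)
    (x : E) (j : Fin m)
    (hcert : ∀ i : Fin m, i ≠ j → f x j > f x i + (K i + K j) * ε) :
    ∀ x' : E, ‖x - x'‖ ≤ ε → ∀ i : Fin m, i ≠ j → f x' j > f x' i := by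
  intro x' hx' i hij
  have h1 := abs_le.mp (hLip i x x')
  have h2 := abs_le.mp (hLip j x x')
  have h3 := mul_le_mul_of_nonneg_left hx' (hK i)
  have h4 := mul_le_mul_of_nonneg_left hx' (hK j)
  have h5 := hcert i hij
  have h6 : (K i + K j) * ε = K i * ε + K j * ε := add_mul _ _ _
  linarith [h1.1, h1.2, h2.1, h2.2]
end

section
/- Let E be a real normed vector space, m ≥ 1, f : E → (Fin m → ℝ) a classifier with m logits, ε ≥ 0, and K : Fin m → ℝ with K_i ≥ 0 such that each logit x ↦ f(x)_i is Lipschitz with constant K_i. Suppose x₁, x₂ ∈ E with ‖x₁ − x₂‖ ≤ ε, and suppose class j₁ satisfies the GloRo certification condition at x₁ with radius ε/2 (for every i ≠ j₁, f(x₁)_{j₁} > f(x₁)_i + (K_i + K_{j₁})·(ε/2)) and class j₂ satisfies the GloRo certification condition at x₂ with radius ε/2. Then j₁ = j₂. Consequently the GloRo net built with radius ε/2 is ε-globally-robust: any two inputs at distance at most ε on which it does not abstain receive the same class. (Theorem 2 of the paper.) -/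
theorem gloro_global_robustness
    {E : Type*} [NormedAddCommGroup E] [NormedSpace ℝ E]
    {m : ℕ} (hm : 1 ≤ m) (f : E → Fin m → ℝ)
    (ε : ℝ) (hε : 0 ≤ ε)
    (K : Fin m → ℝ) (hK : ∀ i, 0 ≤ K i)
    (hLip : ∀ i : Fin m, ∀ x₁ x₂ : E, |f x₁ i - f x₂ i| ≤ K i * ‖x₁ - x₂‖)
    (x₁ x₂ : E) (hx : ‖x₁ - x₂‖ ≤ ε)
    (j₁ j₂ : Fin m)
    (hcert₁ : ∀ i : Fin m, i ≠ j₁ → f x₁ j₁ > f x₁ i + (K i + K j₁) * (ε / 2))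
    (hcert₂ : ∀ i : Fin m, i ≠ j₂ → f x₂ j₂ > f x₂ i + (K i + K j₂) * (ε / 2)) :
    j₁ = j₂ := by
  by_contra hne
  have h1 := hcert₁ j₂ (fun h => hne h.symm)
  have h2 := hcert₂ j₁ hne
  have a1 := (abs_le.mp (hLip j₁ x₁ x₂)).2
  have a2 := (abs_le.mp (hLip j₂ x₁ x₂)).1
  have b1 := mul_le_mul_of_nonneg_left hx (hK j₁)
  have b2 := mul_le_mul_of_nonneg_left hx (hK j₂)
  linarith
end

section
/- Let E = EuclideanSpace ℝ (Fin n), let f : E → ℝ be a binary classifier (predicting class 1 exactly when f(x) > 0), and let ε > 0. Let S ⊆ E be a finite set of points such that for every x ∈ S there exists K(x) ≥ 0 with f Lipschitz with constant K(x) on the closed ball of radius ε centered at x, and |f(x)| > ε·K(x) (i.e., every point of S is verified via a local Lipschitz constant). Then there exists a classifier g : E → ℝ and a constant K_G ≥ 0 such that g is Lipschitz with constant K_G on all of E, and for every x ∈ S: (1) g makes the same prediction as f, i.e. 0 < g(x) ↔ 0 < f(x), and (2) |g(x)| > ε·K_G (i.e., every point of S is verified via the global Lipschitz constant of g). (Theorem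 3 of the paper.) -/
theorem global_lipschitz_suffices
    {n : ℕ} (f : EuclideanSpace ℝ (Fin n) → ℝ)
    (ε : ℝ) (hε : 0 < ε)
    (S : Set (EuclideanSpace ℝ (Fin n))) (hS : S.Finite)
    (hloc : ∀ x ∈ S, ∃ K : ℝ, 0 ≤ K ∧
      (∀ y₁ ∈ Metric.closedBall x ε, ∀ y₂ ∈ Metric.closedBall x ε,
        |f y₁ - f y₂| ≤ K * ‖y₁ - y₂‖) ∧
      |f x| > ε * K) :
    ∃ (g : EuclideanSpace ℝ (Fin n) → ℝ) (K_G : ℝ), 0 ≤ K_G ∧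
      (∀ x₁ x₂ : EuclideanSpace ℝ (Fin n), |g x₁ - g x₂| ≤ K_G * ‖x₁ - x₂‖) ∧
      ∀ x ∈ S, (0 < g x ↔ 0 < f x) ∧ |g x| > ε * K_G := by
  classical
  have hsep : ∀ x ∈ S, ∀ y ∈ S, 0 < f x → ¬ 0 < f y → 2 * ε < ‖x - y‖ := by
    intro x hx y hy hfx hfy
    by_contra! hle
    obtain ⟨K, hK, hL, hv⟩ := hloc x hx
    obtain ⟨K', hK', hL', hv'⟩ := hloc y hy
    have h1 : ‖midpoint ℝ x y - x‖ ≤ ε := by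
      rw [← dist_eq_norm, dist_midpoint_left, dist_eq_norm]
      norm_num
      linarith
    have h2 : ‖midpoint ℝ x y - y‖ ≤ ε := by
      rw [← dist_eq_norm, dist_midpoint_right, dist_eq_norm]
      norm_num
      linarith
    have a1 := hL (midpoint ℝ x y) (by rw [Metric.mem_closedBall, dist_eq_norm]; exact h1)
      x (Metric.mem_closedBall_self hε.le)
    have a2 := hL' (midpoint ℝ x y) (by rw [Metric.mem_closedBall, dist_eq_norm]; exact h2)
      y (Metric.mem_closedBall_self hε.le)
    have b1 := mul_le_mul_of_nonneg_left h1 hK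
    have b2 := mul_le_mul_of_nonneg_left h2 hK'
    rw [abs_of_pos hfx] at hv
    rw [abs_of_nonpos (not_lt.mp hfy)] at hv'
    have c1 := (abs_le.mp a1).1
    have c2 := (abs_le.mp a2).2
    linarith
  have hev : ∀ᶠ K in nhdsWithin ε⁻¹ (Set.Iio ε⁻¹), ∀ p ∈ S ×ˢ S,
      0 < f p.1 → ¬ 0 < f p.2 → 2 ≤ K * ‖p.1 - p.2‖ := by
    rw [Filter.eventually_all_finite (hS.prod hS)]
    rintro ⟨x, y⟩ ⟨hx, hy⟩
    by_cases h : 0 < f x ∧ ¬ 0 < f y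
    · have h3 := hsep x hx y hy h.1 h.2
      have h4 : 2 < ε⁻¹ * ‖x - y‖ := by
        rw [inv_mul_eq_div, lt_div_iff₀ hε]; exact h3
      have hc : ContinuousAt (fun K : ℝ => K * ‖x - y‖) ε⁻¹ := by fun_prop
      have h5 := (hc.eventually (lt_mem_nhds h4)).filter_mono
        (nhdsWithin_le_nhds (s := Set.Iio ε⁻¹))
      filter_upwards [h5] with K hK _ _ using hK.le
    · exact Filter.Eventually.of_forall fun K h1 h2 => absurd ⟨h1, h2⟩ h
  have hpos : ∀ᶠ K in nhdsWithin ε⁻¹ (Set.Iio ε⁻¹), 0 < K :=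
    (lt_mem_nhds (inv_pos.mpr hε)).filter_mono nhdsWithin_le_nhds
  obtain ⟨K, ⟨hK, hK0⟩, hKlt⟩ := ((hev.and hpos).and self_mem_nhdsWithin).exists
  have hKε : ε * K < 1 := by
    have := mul_lt_mul_of_pos_left (Set.mem_Iio.mp hKlt) hε
    rwa [mul_inv_cancel₀ hε.ne'] at this
  have hLip : LipschitzOnWith ⟨K, hK0.le⟩ (fun x => if 0 < f x then (1 : ℝ) else -1) S := by
    apply LipschitzOnWith.of_dist_le_mul
    intro x hx y hy
    rw [Real.dist_eq, dist_eq_norm]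
    change _ ≤ K * ‖x - y‖
    have hn : 0 ≤ K * ‖x - y‖ := by positivity
    by_cases h1 : 0 < f x <;> by_cases h2 : 0 < f y
    · simpa [h1, h2] using hn
    · have := hK (x, y) ⟨hx, hy⟩ h1 h2
      simp only [h1, h2, if_true, if_false]
      norm_num
      exact this
    · have := hK (y, x) ⟨hy, hx⟩ h2 h1
      simp only [h1, h2, if_true, if_false]
      rw [norm_sub_rev]
      norm_num
      exact this
    · simpa [h1, h2] using hn
  obtain ⟨g, hg, hgS⟩ := hLip.extend_real
  refine ⟨g, K, hK0.le, fun x y => ?_, fun x hx => ?_⟩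
  · have := hg.dist_le_mul x y
    rwa [Real.dist_eq, dist_eq_norm] at this
  · rw [← hgS hx]
    by_cases h : 0 < f x
    · simp [h, hKε]
    · simp only [h, if_false]
      norm_num
      exact hKε
end

section
/- Let E be a real normed vector space, f : E → ℝ a binary classifier, ε ≥ 0, and S ⊆ E a set such that for every x ∈ S there exists K(x) ≥ 0 with f Lipschitz with constant K(x) on the closed ball of radius ε around x and |f(x)| > ε·K(x). Then for all x₁, x₂ ∈ S such that f(x₁) > 0 and f(x₂) ≤ 0 (or vice versa), ‖x₁ − x₂‖ > 2ε. (Combination of the local certification principle with Lemma 1, used in the proof of Theorem 3: points of S verified via local Lipschitz constants and classified differently are more than 2ε-separated.) -/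
theorem certified_points_separated
    {E : Type*} [NormedAddCommGroup E] [NormedSpace ℝ E]
    (f : E → ℝ) (ε : ℝ) (hε : 0 ≤ ε) (S : Set E)
    (hloc : ∀ x ∈ S, ∃ K : ℝ, 0 ≤ K ∧
      (∀ y₁ ∈ Metric.closedBall x ε, ∀ y₂ ∈ Metric.closedBall x ε,
        |f y₁ - f y₂| ≤ K * ‖y₁ - y₂‖) ∧
      |f x| > ε * K) :
    ∀ x₁ ∈ S, ∀ x₂ ∈ S, (0 < f x₁ ↔ ¬ 0 < f x₂) → ‖x₁ - x₂‖ > 2 * ε := by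
  have key : ∀ x ∈ S, ∀ m : E, ‖x - m‖ ≤ ε → (0 < f x ↔ 0 < f m) := by
    intro x hx m hm
    obtain ⟨K, hK, hL, hgt⟩ := hloc x hx
    have h1 := hL x (Metric.mem_closedBall_self hε) m
      (by rw [Metric.mem_closedBall, dist_comm, dist_eq_norm]; exact hm)
    have h2 : K * ‖x - m‖ ≤ K * ε := mul_le_mul_of_nonneg_left hm hK
    have h3 : |f x - f m| < |f x| := by linarith [mul_comm K ε]
    obtain ⟨h4, h5⟩ := abs_lt.1 h3
    constructor
    · intro h
      rw [abs_of_pos h] at h5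
      linarith
    · intro h
      by_contra hn
      rw [abs_of_nonpos (not_lt.1 hn)] at h4
      linarith
  intro x₁ h₁ x₂ h₂ hiff
  by_contra hn
  have hn' : ‖x₁ - x₂‖ ≤ 2 * ε := not_lt.1 hn
  have e₁ : ‖x₁ - midpoint ℝ x₁ x₂‖ ≤ ε := by
    rw [← dist_eq_norm, dist_left_midpoint, dist_eq_norm, Real.norm_eq_abs, abs_two]
    linarith
  have e₂ : ‖x₂ - midpoint ℝ x₁ x₂‖ ≤ ε := by
    rw [← dist_eq_norm, dist_right_midpoint, dist_eq_norm, Real.norm_eq_abs, abs_two]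
    linarith
  have k₁ := key x₁ h₁ _ e₁
  have k₂ := key x₂ h₂ _ e₂
  tauto
end

section
/- Let E = EuclideanSpace ℝ (Fin n), ε > 0, S ⊆ E a finite set, and ℓ : E → Bool a binary labeling such that any two points of S with different labels are more than 2ε apart: for all p, q ∈ S with ℓ(p) ≠ ℓ(q), ‖p − q‖ > 2ε. Then there exists g : E → ℝ such that g is Lipschitz on E with constant 1/ε, and for every p ∈ S: 0 < g(p) ↔ ℓ(p) = true, and |g(p)| ≥ 1. (The constructive core of the proof of Theorem 3: from 2ε-separated labeled data one builds a globally (1/ε)-Lipschitz function whose sign matches the labels and whose magnitude on the data is at least 1, hence at least ε times its global Lipschitz constant.) -/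
theorem voronoi_construction_binary
    {n : ℕ} (ε : ℝ) (hε : 0 < ε)
    (S : Set (EuclideanSpace ℝ (Fin n))) (hS : S.Finite)
    (ℓ : EuclideanSpace ℝ (Fin n) → Bool)
    (hsep : ∀ p ∈ S, ∀ q ∈ S, ℓ p ≠ ℓ q → ‖p - q‖ > 2 * ε) :
    ∃ g : EuclideanSpace ℝ (Fin n) → ℝ,
      (∀ x₁ x₂ : EuclideanSpace ℝ (Fin n), |g x₁ - g x₂| ≤ (1 / ε) * ‖x₁ - x₂‖) ∧
      ∀ p ∈ S, (0 < g p ↔ ℓ p = true) ∧ 1 ≤ |g p| := by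
  -- The labels, viewed as ±1 values, are (1/ε)-Lipschitz on S; extend by McShane.
  have hK : (0 : ℝ) ≤ 1 / ε := by positivity
  have hf : LipschitzOnWith ⟨1 / ε, hK⟩ (fun x => if ℓ x = true then (1 : ℝ) else -1) S := by
    apply LipschitzOnWith.of_dist_le_mul
    intro x hx y hy
    show _ ≤ (1 / ε) * dist x y
    by_cases h : ℓ x = ℓ y
    · simp only [h, dist_self]
      positivity
    · have h1 := hsep x hx y hy h
      rw [← dist_eq_norm] at h1
      have h2 : 2 ≤ (1 / ε) * dist x y := by
        rw [one_div, inv_mul_eq_div, le_div_iff₀ hε]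
        exact h1.le
      refine le_trans ?_ h2
      rw [Real.dist_eq]
      split_ifs <;> norm_num
  obtain ⟨g, hg, hfg⟩ := hf.extend_real
  refine ⟨g, fun x y => ?_, fun p hp => ?_⟩
  · rw [← Real.dist_eq, ← dist_eq_norm]
    exact hg.dist_le_mul x y
  · rw [← hfg hp]
    by_cases h : ℓ p = true
    · simp [h]
    · simp only [h]
      norm_num
end

section
/- Let E = EuclideanSpace ℝ (Fin n), ε > 0, m ≥ 1, S ⊆ E a finite set, and ℓ : E → Fin m a labeling such that any two points of S with different labels are more than 2ε apart: for all p, q ∈ S with ℓ(p) ≠ ℓ(q), ‖p − q‖ > 2ε. Then there exists a classifier g : E → (Fin m → ℝ) such that for every pair of distinct classes i ≠ j, the margin function x ↦ g(x)_j − g(x)_i is Lipschitz on E with constant 1/ε, and for every p ∈ S and every class i ≠ ℓ(p), g(p)_{ℓ(p)} − g(p)_i ≥ 1; in particular every point of S is certified via the global margin Lipschitz constants: g(p)_{ℓ(p)} − g(p)_i ≥ ε·(1/ε) for all i ≠ ℓ(p). (The categorical extension of Theorem 3 described in Appendix A.4: the m-class analogue of the Voronoi-distance construction, with one logit per class set to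 the signed boundary distance and the rest to zero.) -/
theorem voronoi_construction_categorical
    {n : ℕ} (ε : ℝ) (hε : 0 < ε)
    {m : ℕ} (hm : 1 ≤ m)
    (S : Set (EuclideanSpace ℝ (Fin n))) (hS : S.Finite)
    (ℓ : EuclideanSpace ℝ (Fin n) → Fin m)
    (hsep : ∀ p ∈ S, ∀ q ∈ S, ℓ p ≠ ℓ q → ‖p - q‖ > 2 * ε) :
    ∃ g : EuclideanSpace ℝ (Fin n) → Fin m → ℝ,
      (∀ i j : Fin m, i ≠ j → ∀ x₁ x₂ : EuclideanSpace ℝ (Fin n),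
        |(g x₁ j - g x₁ i) - (g x₂ j - g x₂ i)| ≤ (1 / ε) * ‖x₁ - x₂‖) ∧
      (∀ p ∈ S, ∀ i : Fin m, i ≠ ℓ p → g p (ℓ p) - g p i ≥ 1) ∧
      (∀ p ∈ S, ∀ i : Fin m, i ≠ ℓ p → g p (ℓ p) - g p i ≥ ε * (1 / ε)) := by
  classical
  let T : Fin m → Set (EuclideanSpace ℝ (Fin n)) := fun i => {p | p ∈ S ∧ ℓ p = i}
  have hT : ∀ i, (T i).Finite := fun i => hS.subset (fun p hp => hp.1)
  obtain ⟨d, hd0, hdL, hdS, hdz⟩ : ∃ d : Fin m → EuclideanSpace ℝ (Fin n) → ℝ,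
      (∀ i x, 0 ≤ d i x) ∧ (∀ i x y, d i x ≤ d i y + ‖x - y‖) ∧
      (∀ i j, i ≠ j → ∀ x y, 2 * ε ≤ d i x + d j y + ‖x - y‖) ∧
      (∀ p ∈ S, d (ℓ p) p = 0) := by
    refine ⟨fun i x => if (T i).Nonempty then Metric.infDist x (T i) else 2 * ε, ?_, ?_, ?_, ?_⟩
    · intro i x
      dsimp only
      split_ifs
      · exact Metric.infDist_nonneg
      · positivity
    · intro i x y
      dsimp only
      split_ifs
      · rw [← dist_eq_norm]
        exact Metric.infDist_le_infDist_add_dist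
      · linarith [norm_nonneg (x - y)]
    · intro i j hij x y
      have hn := norm_nonneg (x - y)
      dsimp only
      split_ifs with h1 h2 h2
      · obtain ⟨q, hq, hq'⟩ := (hT i).isCompact.exists_infDist_eq_dist h1 x
        obtain ⟨r, hr, hr'⟩ := (hT j).isCompact.exists_infDist_eq_dist h2 y
        rw [hq', hr', ← dist_eq_norm]
        have h3 := hsep q hq.1 r hr.1 (by rw [hq.2, hr.2]; exact hij)
        rw [← dist_eq_norm] at h3
        have h4 := dist_triangle4 q x y r
        rw [dist_comm q x] at h4
        linarith
      · linarith [Metric.infDist_nonneg (x := x) (s := T i)]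
      · linarith [Metric.infDist_nonneg (x := y) (s := T j)]
      · linarith
    · intro p hp
      have hm : p ∈ T (ℓ p) := ⟨hp, rfl⟩
      dsimp only
      rw [if_pos ⟨p, hm⟩]
      exact Metric.infDist_zero_of_mem hm
  have key : ∀ p ∈ S, ∀ i : Fin m, i ≠ ℓ p →
      (1 / ε) * max 0 (ε - d (ℓ p) p) - (1 / ε) * max 0 (ε - d i p) ≥ 1 := by
    intro p hp i hi
    have h1 := hdS i (ℓ p) hi p p
    rw [hdz p hp, sub_self, norm_zero] at h1
    rw [hdz p hp, max_eq_right (by linarith), max_eq_left (by linarith)]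
    rw [sub_zero, mul_zero, sub_zero, one_div, inv_mul_cancel₀ hε.ne']
  refine ⟨fun x i => (1 / ε) * max 0 (ε - d i x), ?_, key, ?_⟩
  · intro i j hij x y
    dsimp only
    rw [← mul_sub, ← mul_sub, ← mul_sub, abs_mul, abs_of_pos (by positivity : 0 < 1 / ε)]
    refine mul_le_mul_of_nonneg_left ?_ (by positivity)
    have hn := norm_nonneg (x - y)
    have a1 := hdL i x y
    have a2 := hdL i y x
    have a3 := hdL j x y
    have a4 := hdL j y x
    have b1 := hdS i j hij x y
    have b2 := hdS i j hij y x
    have b3 := hdS i j hij x x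
    have b4 := hdS i j hij y y
    rw [norm_sub_rev y x] at a2 a4 b2
    rw [sub_self, norm_zero] at b3 b4
    rw [abs_le]
    rcases max_cases 0 (ε - d i x) with ⟨e1, f1⟩ | ⟨e1, f1⟩ <;>
    rcases max_cases 0 (ε - d j x) with ⟨e2, f2⟩ | ⟨e2, f2⟩ <;>
    rcases max_cases 0 (ε - d i y) with ⟨e3, f3⟩ | ⟨e3, f3⟩ <;>
    rcases max_cases 0 (ε - d j y) with ⟨e4, f4⟩ | ⟨e4, f4⟩ <;>
    rw [e1, e2, e3, e4] <;> constructor <;> linarith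
  · intro p hp i hi
    rw [mul_one_div_cancel hε.ne']
    exact key p hp i hi
end
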